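/- arXiv:2306.16739 — 2 statements merged into one kernel-verified Lean document; each statement's English description precedes it below -/
import Mathlib

section
/- Let K ≥ 1 be a natural number and ρ ∈ (0,1) a real number with (1 − ρ)(K + 1) > 2. Define f(r) = (1 − ρ)·( r/(r − 1) − K/(r^K − 1) ) for r > 1. Then f is continuous on (1, ∞), f(r) → (1 − ρ)(K + 1)/2 as r → 1⁺, f(r) → 1 − ρ as r → ∞, and consequently there exists r > 1 with f(r) = 1. -/
open Filter Set Topology

/-!
With `S j = 1 + r + ⋯ + r ^ (j - 1)`, the coverage `r / (r - 1) - K / (r ^ K - 1)` equals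
`∑ j ∈ {1, …, K}, S j / S K`. This expression has no singularity at `r = 1`, where it takes the
value `∑ j ∈ {1, …, K}, j / K = (K + 1) / 2`; hence continuity and the limit at `1`. At infinity
the original form tends to `1`, and the intermediate value theorem applies between the two limits.
-/

/-- The coverage of a geometric array: the `n` antennas lie at the partial sums of the spacings
`1, x, …, x ^ (n - 1)`, and their positions are normalized by the last one and added up. In
contrast to the closed form `x / (x - 1) - n / (x ^ n - 1)`, it is meaningful at `x = 1`. -/
def geomCoverage {F : Type*} [Field F] (n : ℕ) (x : F) : F :=
  ∑ j ∈ Finset.range n, (∑ i ∈ Finset.range (j + 1), x ^ i) / ∑ i ∈ Finset.range n, x ^ i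

section Field

variable {F : Type*} [Field F] {n : ℕ}

theorem sum_pow_succ_sub_one (n : ℕ) {x : F} (hx : x ≠ 1) :
    ∑ j ∈ Finset.range n, (x ^ (j + 1) - 1) = x * (x ^ n - 1) / (x - 1) - n := by
  simp only [pow_succ', Finset.sum_sub_distrib, ← Finset.mul_sum, geom_sum_eq hx,
    Finset.sum_const, Finset.card_range, nsmul_one, mul_div_assoc]

theorem geomCoverage_eq_div_sub_div {x : F} (hxn : x ^ n ≠ 1) :
    geomCoverage n x = x / (x - 1) - n / (x ^ n - 1) := by
  have hx : x ≠ 1 := by rintro rfl; exact hxn (one_pow n)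
  have hx₀ : x - 1 ≠ 0 := sub_ne_zero.2 hx
  have hxn₀ : x ^ n - 1 ≠ 0 := sub_ne_zero.2 hxn
  calc
    geomCoverage n x = ∑ j ∈ Finset.range n, (x ^ (j + 1) - 1) / (x ^ n - 1) := by
      simp only [geomCoverage, geom_sum_eq hx, div_div_div_cancel_right₀ hx₀]
    _ = (x * (x ^ n - 1) / (x - 1) - n) / (x ^ n - 1) := by
      rw [← Finset.sum_div, sum_pow_succ_sub_one n hx]
    _ = x / (x - 1) - n / (x ^ n - 1) := by field_simp

theorem geomCoverage_one [CharZero F] (hn : n ≠ 0) : geomCoverage n (1 : F) = (n + 1) / 2 := by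
  have gauss : (∑ j ∈ Finset.range n, ((j : F) + 1)) * 2 = (n + 1) * n := by
    have h := Finset.sum_range_id_mul_two (n + 1)
    rw [Finset.sum_range_succ', add_zero, Nat.add_sub_cancel] at h
    exact_mod_cast h
  have hn₀ : (n : F) ≠ 0 := Nat.cast_ne_zero.2 hn
  simp only [geomCoverage, one_pow, Finset.sum_const, Finset.card_range, nsmul_one,
    Nat.cast_add, Nat.cast_one, ← Finset.sum_div]
  rw [div_eq_div_iff hn₀ two_ne_zero, gauss]

end Field

theorem tendsto_pow_sub_one_atTop {R : Type*} [Ring R] [LinearOrder R] [IsStrictOrderedRing R]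
    {n : ℕ} (hn : n ≠ 0) : Tendsto (fun x : R => x ^ n - 1) atTop atTop := by
  simpa only [sub_eq_add_neg] using
    tendsto_atTop_add_const_right atTop (-1) (tendsto_pow_atTop (α := R) hn)

section OrderedField

variable {F : Type*} [Field F] [LinearOrder F] [IsStrictOrderedRing F] [TopologicalSpace F]
  {n : ℕ}

theorem continuousOn_geomCoverage [IsTopologicalDivisionRing F] (n : ℕ) :
    ContinuousOn (geomCoverage n : F → F) (Ici 0) := by
  refine continuousOn_finsetSum _ fun j hj =>
    ContinuousOn.div (by fun_prop) (by fun_prop) fun x hx => (geom_sum_pos hx ?_).ne'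
  exact Nat.ne_zero_of_lt (Finset.mem_range.1 hj)

theorem tendsto_div_sub_one_atTop [OrderTopology F] :
    Tendsto (fun x : F => x / (x - 1)) atTop (𝓝 1) := by
  have h := ((tendsto_pow_sub_one_atTop (R := F) one_ne_zero).const_div_atTop 1).const_add 1
  simp only [pow_one, add_zero] at h
  refine h.congr' ?_
  filter_upwards [eventually_ne_atTop 1] with x hx
  rw [one_add_div (sub_ne_zero.2 hx), sub_add_cancel]

theorem tendsto_geomCoverage_atTop [OrderTopology F] (hn : n ≠ 0) :
    Tendsto (geomCoverage n : F → F) atTop (𝓝 1) := by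
  have h := (tendsto_div_sub_one_atTop (F := F)).sub
    ((tendsto_pow_sub_one_atTop hn).const_div_atTop (n : F))
  rw [sub_zero] at h
  refine h.congr' ?_
  filter_upwards [eventually_gt_atTop 1] with x hx
  exact (geomCoverage_eq_div_sub_div (one_lt_pow₀ hx hn).ne').symm

end OrderedField

/-- Existence of the common ratio `r > 1` solving the coverage equation
`C_RAA = (1-ρ)(r/(r-1) - K/(r^K - 1)) = 1`: the coverage function is continuous
on `(1, ∞)`, tends to `(1-ρ)(K+1)/2` as `r → 1⁺` and to `1-ρ` as `r → ∞`, hence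
takes the value `1` for some `r > 1` whenever `(1-ρ)(K+1) > 2`. -/
theorem raa_ratio_exists
    (K : ℕ) (hK : 1 ≤ K) (ρ : ℝ) (hρ0 : 0 < ρ) (hρ1 : ρ < 1)
    (hcond : (1 - ρ) * ((K : ℝ) + 1) > 2)
    (f : ℝ → ℝ)
    (hf : ∀ r : ℝ, f r = (1 - ρ) * (r / (r - 1) - (K : ℝ) / (r ^ K - 1))) :
    ContinuousOn f (Set.Ioi (1 : ℝ)) ∧
    Tendsto f (nhdsWithin 1 (Set.Ioi (1 : ℝ))) (nhds ((1 - ρ) * ((K : ℝ) + 1) / 2)) ∧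
    Tendsto f atTop (nhds (1 - ρ)) ∧
    ∃ r : ℝ, 1 < r ∧ f r = 1 := by
  have hK₀ : K ≠ 0 := Nat.one_le_iff_ne_zero.1 hK
  have f_eq : EqOn (fun r => (1 - ρ) * geomCoverage K r) f (Ioi 1) := fun r hr => by
    have hrK : r ^ K ≠ 1 := (one_lt_pow₀ hr hK₀).ne'
    simp only [hf, geomCoverage_eq_div_sub_div hrK]
  have hcont : ContinuousOn (fun r : ℝ => (1 - ρ) * geomCoverage K r) (Ici 0) :=
    (continuousOn_geomCoverage K).const_mul _
  have f_cont : ContinuousOn f (Ioi 1) :=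
    (hcont.mono (Ioi_subset_Ici zero_le_one)).congr f_eq.symm
  have f_one : Tendsto f (𝓝[>] 1) (𝓝 ((1 - ρ) * (K + 1) / 2)) := by
    have h := (hcont.continuousAt (Ici_mem_nhds one_pos)).tendsto
    rw [geomCoverage_one hK₀, ← mul_div_assoc] at h
    exact (h.mono_left nhdsWithin_le_nhds).congr' (f_eq.eventuallyEq_of_mem self_mem_nhdsWithin)
  have f_atTop : Tendsto f atTop (𝓝 (1 - ρ)) := by
    have h := (tendsto_geomCoverage_atTop (F := ℝ) hK₀).const_mul (1 - ρ)
    rw [mul_one] at h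
    exact h.congr' (f_eq.eventuallyEq_of_mem (Ioi_mem_atTop 1))
  have one_mem : (1 : ℝ) ∈ Ioo (1 - ρ) ((1 - ρ) * (K + 1) / 2) := ⟨by linarith, by linarith⟩
  exact ⟨f_cont, f_one, f_atTop, isPreconnected_Ioi.intermediate_value_Ioo
    (le_principal_iff.2 (Ioi_mem_atTop 1)) (le_principal_iff.2 self_mem_nhdsWithin)
    f_cont f_atTop f_one one_mem⟩
end

section
/- Let F > 0, let θ ∈ [0, π/2) and y ∈ ℝ, and define g(y) = √(F² + (F·tan θ − y)²). Then 0 ≤ g(y) − ( F/cos θ − y·sin θ ) ≤ y²/(2F). -/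
/-!
The distance from `y` to the focal point is `‖p - v‖`, where the plane vectors `p = (F, F tan θ)`
and `v = (0, y)` start at the centre of the aperture; here `‖p‖ = F / cos θ` and
`⟪p, v⟫ / ‖p‖ = y sin θ`. The tangent line `‖p‖ - ⟪p, v⟫ / ‖p‖` is the component of `p - v` along
`p`, so it is at most `‖p - v‖` by Cauchy–Schwarz. Conversely, by AM-GM
`2 ‖p - v‖ ‖p‖ ≤ ‖p - v‖² + ‖p‖² = 2 ‖p‖² - 2 ⟪p, v⟫ + ‖v‖²`, and dividing by `2 ‖p‖` bounds the
error by `‖v‖² / (2 ‖p‖) = y² cos θ / (2 F)`.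
-/

open scoped RealInnerProductSpace

section InnerProductSpace

variable {E : Type*} [NormedAddCommGroup E] [InnerProductSpace ℝ E]

theorem norm_sub_inner_div_norm_le_norm_sub (p v : E) :
    ‖p‖ - ⟪p, v⟫ / ‖p‖ ≤ ‖p - v‖ :=
  calc
    ‖p‖ - ⟪p, v⟫ / ‖p‖ = ⟪p, p - v⟫ / ‖p‖ := by
      rw [inner_sub_right, sub_div, real_inner_self_eq_norm_mul_norm, mul_self_div_self]
    _ ≤ ‖p - v‖ :=
      div_le_of_le_mul₀ (norm_nonneg p) (norm_nonneg (p - v))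
        ((real_inner_le_norm p (p - v)).trans_eq (mul_comm _ _))

theorem norm_sub_le_norm_sub_inner_div_norm_add {p : E} (hp : p ≠ 0) (v : E) :
    ‖p - v‖ ≤ ‖p‖ - ⟪p, v⟫ / ‖p‖ + ‖v‖ ^ 2 / (2 * ‖p‖) :=
  calc
    ‖p - v‖ ≤ (‖p - v‖ ^ 2 + ‖p‖ ^ 2) / (2 * ‖p‖) := by
      rw [le_div_iff₀ (by positivity)]
      linarith [two_mul_le_add_sq ‖p - v‖ ‖p‖]
    _ = ‖p‖ - ⟪p, v⟫ / ‖p‖ + ‖v‖ ^ 2 / (2 * ‖p‖) := by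
      rw [norm_sub_sq_real]
      field_simp
      ring

end InnerProductSpace

/-- The focal point `P_n` of the antenna at angle `θ`, for focal length `F`. The first coordinate
runs along the lens axis, the second along the aperture, and the origin is the aperture centre. -/
noncomputable def focalPoint (F θ : ℝ) : EuclideanSpace ℝ (Fin 2) := !₂[F, F * Real.tan θ]

/-- The point at height `y` on the lens aperture, in the coordinates of `focalPoint`. -/
def aperturePoint (y : ℝ) : EuclideanSpace ℝ (Fin 2) := !₂[0, y]

theorem norm_aperturePoint (y : ℝ) : ‖aperturePoint y‖ = |y| := by
  simp [aperturePoint, EuclideanSpace.norm_eq, Real.sqrt_sq_eq_abs]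

theorem inner_focalPoint_aperturePoint (F θ y : ℝ) :
    ⟪focalPoint F θ, aperturePoint y⟫ = F * Real.tan θ * y := by
  simp [focalPoint, aperturePoint, PiLp.inner_apply, mul_comm]

theorem norm_focalPoint_sub_aperturePoint (F θ y : ℝ) :
    ‖focalPoint F θ - aperturePoint y‖ = Real.sqrt (F ^ 2 + (F * Real.tan θ - y) ^ 2) := by
  simp [focalPoint, aperturePoint, EuclideanSpace.norm_eq]

theorem norm_focalPoint {F θ : ℝ} (hF : 0 ≤ F) (hθ : 0 < Real.cos θ) :
    ‖focalPoint F θ‖ = F / Real.cos θ :=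
  calc
    ‖focalPoint F θ‖ = Real.sqrt (F ^ 2 * (1 + Real.tan θ ^ 2)) := by
      simp [focalPoint, EuclideanSpace.norm_eq, mul_pow, mul_add]
    _ = F * Real.sqrt (1 + Real.tan θ ^ 2) := by
      rw [Real.sqrt_mul (sq_nonneg F), Real.sqrt_sq hF]
    _ = F / Real.cos θ := by
      rw [← Real.inv_sqrt_one_add_tan_sq hθ, div_inv_eq_mul]

theorem inner_focalPoint_aperturePoint_div_norm {F θ : ℝ} (hF : 0 < F) (hθ : 0 < Real.cos θ)
    (y : ℝ) : ⟪focalPoint F θ, aperturePoint y⟫ / ‖focalPoint F θ‖ = y * Real.sin θ := by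
  rw [inner_focalPoint_aperturePoint, norm_focalPoint hF.le hθ, Real.tan_eq_sin_div_cos]
  field_simp

theorem focal_distance_taylor_bounds_general {F θ : ℝ} (hF : 0 < F) (hθ : 0 < Real.cos θ)
    (y : ℝ) :
    0 ≤ Real.sqrt (F ^ 2 + (F * Real.tan θ - y) ^ 2)
          - (F / Real.cos θ - y * Real.sin θ) ∧
    Real.sqrt (F ^ 2 + (F * Real.tan θ - y) ^ 2)
          - (F / Real.cos θ - y * Real.sin θ) ≤ y ^ 2 * Real.cos θ / (2 * F) := by
  have norm_eq := norm_focalPoint hF.le hθ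
  have focalPoint_ne_zero : focalPoint F θ ≠ 0 := by
    rw [← norm_pos_iff, norm_eq]
    positivity
  have lower := norm_sub_inner_div_norm_le_norm_sub (focalPoint F θ) (aperturePoint y)
  have upper := norm_sub_le_norm_sub_inner_div_norm_add focalPoint_ne_zero (aperturePoint y)
  have error_eq : y ^ 2 / (2 * (F / Real.cos θ)) = y ^ 2 * Real.cos θ / (2 * F) := by
    field_simp
  rw [inner_focalPoint_aperturePoint_div_norm hF hθ, norm_focalPoint_sub_aperturePoint, norm_eq]
    at lower upper
  rw [norm_aperturePoint, sq_abs, error_eq] at upper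
  exact ⟨sub_nonneg.mpr lower, sub_le_iff_le_add'.mpr upper⟩

/-- First-order approximation of the distance to the `n`-th focal point (Eq. (A.1)):
the tangent-line expansion `F/cos θ − y·sin θ` underestimates
`g(y) = √(F² + (F·tan θ − y)²)` by at most `y²/(2F)`. -/
theorem focal_distance_taylor_bounds
    (F : ℝ) (hF : 0 < F) (θ : ℝ) (hθ : θ ∈ Set.Ico 0 (Real.pi / 2)) (y : ℝ) :
    0 ≤ Real.sqrt (F ^ 2 + (F * Real.tan θ - y) ^ 2)
          - (F / Real.cos θ - y * Real.sin θ) ∧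
    Real.sqrt (F ^ 2 + (F * Real.tan θ - y) ^ 2)
          - (F / Real.cos θ - y * Real.sin θ) ≤ y ^ 2 / (2 * F) := by
  have cos_pos : 0 < Real.cos θ :=
    Real.cos_pos_of_mem_Ioo ⟨(neg_lt_zero.mpr Real.pi_div_two_pos).trans_le hθ.1, hθ.2⟩
  refine (focal_distance_taylor_bounds_general hF cos_pos y).imp_right fun upper ↦ upper.trans ?_
  gcongr
  exact mul_le_of_le_one_right (sq_nonneg y) (Real.cos_le_one θ)
end
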